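/- arXiv:1204.6692 — 2 statements merged into one kernel-verified Lean document; each statement's English description precedes it below -/
import Mathlib

section
/- Let f ∈ F_2[x] be a monic irreducible polynomial of degree n ≥ 1 and let g = f^Q be its Q-transform, of degree 2n. Then coeff g (2n−1) = coeff g 1 = coeff f (n−1); in particular, if coeff f (n−1) = 1 then coeff g (2n−1) = coeff g 1 = 1, and if coeff f (n−1) = 0 then coeff g (2n−1) = coeff g 1 = 0. -/
open Polynomial

noncomputable def Qtrans (f : Polynomial (ZMod 2)) : Polynomial (ZMod 2) :=
  ∑ i ∈ Finset.range (f.natDegree + 1),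
    C (f.coeff i) * X ^ (f.natDegree - i) * (X ^ 2 + 1) ^ i

/-!
The `Q`-transform of `f` is self-reciprocal, since `x + x⁻¹` is invariant under `x ↦ x⁻¹`, so its
coefficients of `x ^ (2 n - 1)` and `x` agree. Modulo `x ^ 2` the `i`-th summand
`x ^ (n - i) (x ^ 2 + 1) ^ i` is `x ^ (n - i)`, so only `i = n - 1` contributes to the coefficient
of `x`.
-/

section Semiring

variable {R : Type*} [Semiring R]

/-- The `Q`-transform `x ^ n * f (x + x⁻¹)` of a polynomial `f` of degree `n` over any semiring,
expanded so that no inverse of `x` occurs; `Qtrans` is the case `R = ZMod 2`. -/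
noncomputable def qTransform (f : R[X]) : R[X] :=
  ∑ i ∈ Finset.range (f.natDegree + 1),
    C (f.coeff i) * X ^ (f.natDegree - i) * (X ^ 2 + 1) ^ i

theorem reflect_sum {ι : Type*} (N : ℕ) (s : Finset ι) (p : ι → R[X]) :
    reflect N (∑ i ∈ s, p i) = ∑ i ∈ s, reflect N (p i) := by
  ext k
  simp only [coeff_reflect, finsetSum_coeff]

theorem reflect_pow {p : R[X]} {N : ℕ} (hp : p.natDegree ≤ N) (i : ℕ) :
    reflect (N * i) (p ^ i) = reflect N p ^ i := by
  induction i with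
  | zero => simp
  | succ i ih =>
    have hpow : (p ^ i).natDegree ≤ N * i := by
      rw [mul_comm]
      exact natDegree_pow_le_of_le i hp
    rw [pow_succ, pow_succ, mul_add_one, reflect_mul _ _ hpow hp, ih]

theorem natDegree_X_sq_add_one_le : (X ^ 2 + 1 : R[X]).natDegree ≤ 2 := by
  compute_degree

theorem reflect_X_sq_add_one : reflect 2 (X ^ 2 + 1 : R[X]) = X ^ 2 + 1 := by
  rw [reflect_add, reflect_monomial, reflect_one, revAt_le le_rfl, Nat.sub_self, pow_zero, add_comm]

theorem reflect_X_pow_mul_X_sq_add_one_pow (m i : ℕ) :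
    reflect (2 * (m + i)) (X ^ m * (X ^ 2 + 1) ^ i : R[X]) = X ^ m * (X ^ 2 + 1) ^ i := by
  have hX : (X ^ m : R[X]).natDegree ≤ 2 * m := (natDegree_X_pow_le m).trans (by lia)
  have hpow : ((X ^ 2 + 1 : R[X]) ^ i).natDegree ≤ 2 * i := by
    rw [mul_comm]
    exact natDegree_pow_le_of_le i natDegree_X_sq_add_one_le
  rw [mul_add, reflect_mul _ _ hX hpow, reflect_pow natDegree_X_sq_add_one_le,
    reflect_X_sq_add_one, reflect_monomial, revAt_le (by lia), show 2 * m - m = m by lia]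

theorem reflect_qTransform (f : R[X]) :
    reflect (2 * f.natDegree) (qTransform f) = qTransform f := by
  rw [qTransform, reflect_sum]
  refine Finset.sum_congr rfl fun i hi ↦ ?_
  have hterm : reflect (2 * f.natDegree) (X ^ (f.natDegree - i) * (X ^ 2 + 1) ^ i : R[X]) =
      X ^ (f.natDegree - i) * (X ^ 2 + 1) ^ i := by
    simpa only [Nat.sub_add_cancel (Finset.mem_range_succ_iff.mp hi)] using
      reflect_X_pow_mul_X_sq_add_one_pow (R := R) (f.natDegree - i) i
  rw [mul_assoc, reflect_C_mul, hterm]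

theorem coeff_qTransform_two_mul_sub (f : R[X]) {k : ℕ} (hk : k ≤ 2 * f.natDegree) :
    (qTransform f).coeff (2 * f.natDegree - k) = (qTransform f).coeff k := by
  rw [← revAt_le hk, ← coeff_reflect, reflect_qTransform]

theorem coeff_zero_X_sq_add_one_pow (i : ℕ) : ((X ^ 2 + 1 : R[X]) ^ i).coeff 0 = 1 := by
  induction i with
  | zero => simp
  | succ i ih => simp [pow_succ _ i, ih]

theorem coeff_one_X_sq_add_one_pow (i : ℕ) : ((X ^ 2 + 1 : R[X]) ^ i).coeff 1 = 0 := by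
  induction i with
  | zero => simp [coeff_one]
  | succ i ih => simp [pow_succ _ i, mul_coeff_one, ih, coeff_one]

theorem coeff_one_X_pow_mul_X_sq_add_one_pow (m i : ℕ) :
    (X ^ m * (X ^ 2 + 1) ^ i : R[X]).coeff 1 = if m = 1 then 1 else 0 := by
  rw [coeff_X_pow_mul']
  match m with
  | 0 => simp [coeff_one_X_sq_add_one_pow]
  | 1 => simp [coeff_zero_X_sq_add_one_pow]
  | m + 2 => simp

theorem coeff_one_qTransform {f : R[X]} (hf : 1 ≤ f.natDegree) :
    (qTransform f).coeff 1 = f.coeff (f.natDegree - 1) := by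
  simp only [qTransform, finsetSum_coeff, mul_assoc, coeff_C_mul,
    coeff_one_X_pow_mul_X_sq_add_one_pow]
  rw [Finset.sum_eq_single_of_mem (f.natDegree - 1) (Finset.mem_range.mpr (by lia))]
  · rw [if_pos (Nat.sub_sub_self hf), mul_one]
  · intro i _ hi
    rw [if_neg (by lia), mul_zero]

theorem stmt_11_general {f : R[X]} (hf : 1 ≤ f.natDegree) :
    (qTransform f).coeff (2 * f.natDegree - 1) = f.coeff (f.natDegree - 1) ∧
      (qTransform f).coeff 1 = f.coeff (f.natDegree - 1) :=
  ⟨(coeff_qTransform_two_mul_sub f (by lia)).trans (coeff_one_qTransform hf),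
    coeff_one_qTransform hf⟩

end Semiring

theorem stmt_11 (n : ℕ) (hn : 1 ≤ n) (f : Polynomial (ZMod 2))
    (hmon : f.Monic) (hirr : Irreducible f) (hdeg : f.natDegree = n) :
    (Qtrans f).coeff (2 * n - 1) = f.coeff (n - 1) ∧
    (Qtrans f).coeff 1 = f.coeff (n - 1) := by
  subst hdeg
  exact stmt_11_general hn
end

section
/- Let f ∈ F_2[x] be a polynomial of degree n, let K be a field of characteristic 2 that is an F_2-algebra, and let β ∈ K with β ≠ 0. If β + β⁻¹ is a root of f (i.e. the evaluation of f at β + β⁻¹ via the algebra map is 0), then β is a root of f^Q. -/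
open Polynomial

/-! Regard `f` as a polynomial with constant coefficients in `F₂[X]`: then `Qtrans f` is the value
at `X ^ 2 + 1` of `f` with its roots scaled by `X`. Since `u ^ 2 + 1 = u * (u + u⁻¹)`, specializing
`X` to a unit `u` undoes the scaling, at the cost of the unit factor `u ^ f.natDegree`. -/

theorem Qtrans_eq_eval_scaleRoots (f : (ZMod 2)[X]) :
    Qtrans f = (scaleRoots (f.map C) X).eval (X ^ 2 + 1) := by
  simp only [Qtrans, eval_eq_sum_range, natDegree_scaleRoots, coeff_scaleRoots, coeff_map,
    natDegree_map_eq_of_injective C_injective]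

section Semiring

variable {A : Type*} [Semiring A] [Algebra (ZMod 2) A]

theorem aeval_Qtrans (f : (ZMod 2)[X]) (u : Aˣ) :
    aeval (u : A) (Qtrans f) = (u : A) ^ f.natDegree * aeval ((u : A) + ↑u⁻¹) f := by
  let φ : (ZMod 2)[X] →+* A := (aeval (u : A)).toRingHom
  have φ_X : φ X = u := aeval_X _
  have φ_comp_C : φ.comp C = algebraMap (ZMod 2) A := RingHom.ext fun c => aeval_C _ c
  have φ_factor : φ (X ^ 2 + 1) = φ X * (u + ↑u⁻¹) := by
    simp only [map_add, map_pow, map_one, φ_X, mul_add, Units.mul_inv, pow_two (u : A)]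
  have comm : Commute (φ X) ((u : A) + ↑u⁻¹) := by
    rw [φ_X]
    exact (Commute.refl _).add_right (Commute.refl (u : A)).units_inv_right
  calc
    φ (Qtrans f) = eval₂ φ (φ X * (u + ↑u⁻¹)) (scaleRoots (f.map C) X) := by
      rw [Qtrans_eq_eval_scaleRoots, ← φ_factor, eval₂_at_apply]
    _ = φ X ^ (f.map C).natDegree * eval₂ φ ((u : A) + ↑u⁻¹) (f.map C) :=
      scaleRoots_eval₂_mul_of_commute φ _ X comm fun p q => (Commute.all p q).map φ
    _ = (u : A) ^ f.natDegree * aeval ((u : A) + ↑u⁻¹) f := by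
      rw [φ_X, natDegree_map_eq_of_injective C_injective, eval₂_map, φ_comp_C, aeval_def]

theorem stmt_12_general (f : (ZMod 2)[X]) (u : Aˣ) :
    aeval (u : A) (Qtrans f) = 0 ↔ aeval ((u : A) + ↑u⁻¹) f = 0 := by
  rw [aeval_Qtrans, ← Units.val_pow_eq_pow_val, Units.mul_right_eq_zero]

end Semiring

theorem stmt_12 (n : ℕ) (f : Polynomial (ZMod 2)) (hdeg : f.natDegree = n)
    (K : Type*) [Field K] [CharP K 2] [Algebra (ZMod 2) K]
    (β : K) (hβ : β ≠ 0) (hroot : Polynomial.aeval (β + β⁻¹) f = 0) :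
    Polynomial.aeval β (Qtrans f) = 0 := by
  exact (stmt_12_general f (Units.mk0 β hβ)).mpr hroot
end
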